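/- arXiv:2502.16257 — 15 statements merged into one kernel-verified Lean document; each statement's English description precedes it below -/
import Mathlib

section
/- Let g be a Lie algebra over a field k and let N : g → g be a Nijenhuis operator. Then the bilinear operation [x, y]^N := [N x, y] + [x, N y] − N[x, y] is a Lie bracket on the underlying vector space g, i.e. it is antisymmetric and satisfies the Jacobi identity. -/
/-!
Expand the double bracket `[[x, y]^N, z]^N` and use the Nijenhuis identity twice, for
`N [x, y]^N = [N x, N y]` and for `[N [x, y], N z]`. The terms containing `N [N [x, y], z]` cancel,
and what remains (`nijBracket_nijBracket`) is a combination of iterated brackets `[[a, b], c]`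
carrying `N` on two, one or none of the arguments, with respectively `1`, `-N` and `N ^ 2` applied
outside. Summed cyclically, each of these three groups vanishes by the Jacobi identity of `g`.
-/

/-- The deformed bracket `[x, y]^N = [N x, y] + [x, N y] - N [x, y]`. -/
def nijBracket {K : Type*} [Field K] {g : Type*} [LieRing g] [LieAlgebra K g]
    (N : g →ₗ[K] g) (x y : g) : g :=
  ⁅N x, y⁆ + ⁅x, N y⁆ - N ⁅x, y⁆

/-- The Jacobi identity with all brackets nested to the left. -/
theorem lie_cyclic {g : Type*} [LieRing g] (a b c : g) :
    ⁅⁅a, b⁆, c⁆ + ⁅⁅b, c⁆, a⁆ + ⁅⁅c, a⁆, b⁆ = 0 := by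
  rw [← lie_skew ⁅a, b⁆ c, ← lie_skew ⁅b, c⁆ a, ← lie_skew ⁅c, a⁆ b]
  have h := lie_jacobi a b c
  linear_combination (norm := module) -h

/-- The iterated deformed bracket in a form where `N` is never applied inside a bracket to
anything but `x`, `y`, `z`, so that cyclic sums can be taken term by term. -/
theorem nijBracket_nijBracket {K : Type*} [Field K] {g : Type*} [LieRing g] [LieAlgebra K g]
    (N : g →ₗ[K] g)
    (hN : ∀ x y : g, ⁅N x, N y⁆ = N (⁅N x, y⁆ + ⁅x, N y⁆ - N ⁅x, y⁆)) (x y z : g) :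
    nijBracket N (nijBracket N x y) z =
      ⁅⁅N x, N y⁆, z⁆ + ⁅⁅N x, y⁆, N z⁆ + ⁅⁅x, N y⁆, N z⁆
        - N (⁅⁅N x, y⁆, z⁆ + ⁅⁅x, N y⁆, z⁆ + ⁅⁅x, y⁆, N z⁆) + N (N ⁅⁅x, y⁆, z⁆) := by
  have h := hN ⁅x, y⁆ z
  simp only [map_add, map_sub] at h
  simp only [nijBracket]
  rw [← hN x y]
  simp only [add_lie, sub_lie, map_add, map_sub, h]
  abel

/-- If `N` is a Nijenhuis operator on a Lie algebra `g`, then the deformed bracket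
`[x, y]^N` is a Lie bracket: antisymmetric and satisfying the Jacobi identity. -/
theorem deformed_bracket_is_lie {K : Type*} [Field K] {g : Type*} [LieRing g] [LieAlgebra K g]
    (N : g →ₗ[K] g)
    (hN : ∀ x y : g, ⁅N x, N y⁆ = N (⁅N x, y⁆ + ⁅x, N y⁆ - N ⁅x, y⁆)) :
    (∀ x y : g, nijBracket N x y = - nijBracket N y x) ∧
    (∀ x y z : g,
      nijBracket N (nijBracket N x y) z + nijBracket N (nijBracket N y z) x +
        nijBracket N (nijBracket N z x) y = 0) := by
  refine ⟨fun x y => ?_, fun x y z => ?_⟩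
  · rw [nijBracket, nijBracket, ← lie_skew x (N y), ← lie_skew (N x) y, ← lie_skew x y, map_neg]
    abel
  · have h0 := congrArg (fun t => N (N t)) (lie_cyclic x y z)
    have h1 := congrArg N (lie_cyclic (N x) y z)
    have h2 := congrArg N (lie_cyclic x (N y) z)
    have h3 := congrArg N (lie_cyclic x y (N z))
    have k1 := lie_cyclic (N x) (N y) z
    have k2 := lie_cyclic x (N y) (N z)
    have k3 := lie_cyclic (N x) y (N z)
    simp only [map_add, map_zero] at h0 h1 h2 h3
    rw [nijBracket_nijBracket N hN, nijBracket_nijBracket N hN, nijBracket_nijBracket N hN]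
    simp only [map_add]
    linear_combination (norm := module) h0 - h1 - h2 - h3 + k1 + k2 + k3
end

section
/- Let g be a Lie algebra over a field k and let N : g → g be a Nijenhuis operator. Then for every natural number k ≥ 0, the iterate N^k : g → g is also a Nijenhuis operator on g, i.e. [N^k x, N^k y] = N^k([N^k x, y] + [x, N^k y] − N^k[x, y]) for all x, y ∈ g. -/
/-!
Let the commuting operators `X = N ⊗ 1`, `Y = 1 ⊗ N` act on the arguments of the bracket and let `N`
act on its value. The Nijenhuis identity says that `(X - N) (Y - N)` annihilates the bracket.
As `X ^ j - N ^ j` is a multiple of `X - N` and `Y ^ l - N ^ l` is a multiple of `Y - N`, the product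
`(X ^ j - N ^ j) (Y ^ l - N ^ l)` annihilates it too; `j = l = m` is the claim. The divisibility is
carried out by an induction on each exponent, in `IsNijenhuis.lie_pow_right` and
`IsNijenhuis.lie_pow_pow`.
-/

/-- `N` is a Nijenhuis operator on the Lie algebra `g`. -/
def IsNijenhuis {K : Type*} [Field K] {g : Type*} [LieRing g] [LieAlgebra K g]
    (N : g →ₗ[K] g) : Prop :=
  ∀ x y : g, ⁅N x, N y⁆ = N (⁅N x, y⁆ + ⁅x, N y⁆ - N ⁅x, y⁆)

theorem IsNijenhuis.lie_pow_right {K : Type*} [Field K] {g : Type*} [LieRing g] [LieAlgebra K g]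
    {N : g →ₗ[K] g} (hN : IsNijenhuis N) (l : ℕ) (x y : g) :
    ⁅N x, (N ^ l) y⁆ = N ⁅x, (N ^ l) y⁆ + (N ^ l) ⁅N x, y⁆ - N ((N ^ l) ⁅x, y⁆) := by
  induction l with
  | zero => simp
  | succ l ih =>
    simp only [pow_succ', Module.End.mul_apply]
    rw [hN x ((N ^ l) y), ih]
    simp only [map_add, map_sub]
    abel

/-- The mixed-exponent form of the Nijenhuis identity. -/
theorem IsNijenhuis.lie_pow_pow {K : Type*} [Field K] {g : Type*} [LieRing g] [LieAlgebra K g]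
    {N : g →ₗ[K] g} (hN : IsNijenhuis N) (j l : ℕ) (x y : g) :
    ⁅(N ^ j) x, (N ^ l) y⁆ =
      (N ^ j) ⁅x, (N ^ l) y⁆ + (N ^ l) ⁅(N ^ j) x, y⁆ - (N ^ j) ((N ^ l) ⁅x, y⁆) := by
  induction j with
  | zero => simp
  | succ j ih =>
    simp only [pow_succ', Module.End.mul_apply]
    rw [hN.lie_pow_right l ((N ^ j) x) y, ih]
    simp only [map_add, map_sub]
    abel

/-- If `N` is a Nijenhuis operator, then so is every iterate `N ^ m`. -/
theorem pow_isNijenhuis {K : Type*} [Field K] {g : Type*} [LieRing g] [LieAlgebra K g]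
    (N : g →ₗ[K] g) (hN : IsNijenhuis N) (m : ℕ) :
    IsNijenhuis (N ^ m) := by
  intro x y
  rw [hN.lie_pow_pow m m x y, map_sub, map_add]
  abel
end

section
/- Let g be a Lie algebra over a field k of characteristic zero, N : g → g a Nijenhuis operator, and let N_1, …, N_n : g → g be linear maps such that, setting N_0 = N, for every 0 ≤ p ≤ n one has Σ_{i+j=p} [N_i, N_j]_FN = 0 (an order-n deformation of N). Then there exists a linear map N_{n+1} : g → g such that Σ_{i+j=p} [N_i, N_j]_FN = 0 holds for every 0 ≤ p ≤ n+1 (i.e. the deformation is extensible to order n+1) if and only if there exists a linear map f : g → g with [N, f]_FN = −(1/2) Σ_{i+j=n+1, i,j≥1} [N_i, N_j]_FN, i.e. the obstruction Ob(N_t^n) := −(1/2) Σ_{i+j=n+1, i,j≥1} [N_i, N_j]_FN is a coboundary d_N f = [N, f]_FN of the cochain complex of N. -/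
/-- The Frölicher–Nijenhuis bracket of two linear maps `P, Q : g → g`. -/
def fnBracket {K : Type*} [Field K] {g : Type*} [LieRing g] [LieAlgebra K g]
    (P Q : g →ₗ[K] g) (x y : g) : g :=
  ⁅P x, Q y⁆ + ⁅Q x, P y⁆ - Q (⁅P x, y⁆ + ⁅x, P y⁆ - P ⁅x, y⁆)
    - P (⁅Q x, y⁆ + ⁅x, Q y⁆ - Q ⁅x, y⁆)

/-- The Frölicher–Nijenhuis bracket is symmetric. -/
lemma fnBracket_symm {K : Type*} [Field K] {g : Type*} [LieRing g] [LieAlgebra K g]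
    (P Q : g →ₗ[K] g) (x y : g) : fnBracket P Q x y = fnBracket Q P x y := by
  unfold fnBracket
  abel

/-- The two extreme terms of the degree `n + 1` sum coincide by symmetry, so the sum vanishes
iff the common value is `-1/2` times the sum of the inner terms. -/
lemma sum_fnBracket_eq_zero_iff {K : Type*} [Field K] [CharZero K] {g : Type*} [LieRing g]
    [LieAlgebra K g] (M : ℕ → (g →ₗ[K] g)) (n : ℕ) (x y : g) :
    ∑ i ∈ Finset.range (n + 1 + 1), fnBracket (M i) (M (n + 1 - i)) x y = 0 ↔
      fnBracket (M 0) (M (n + 1)) x y =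
        -(2 : K)⁻¹ • ∑ i ∈ Finset.Icc 1 n, fnBracket (M i) (M (n + 1 - i)) x y := by
  have key : ∑ i ∈ Finset.range (n + 1 + 1), fnBracket (M i) (M (n + 1 - i)) x y =
      (2 : K) • fnBracket (M 0) (M (n + 1)) x y +
        ∑ i ∈ Finset.Icc 1 n, fnBracket (M i) (M (n + 1 - i)) x y := by
    have hI : ∑ i ∈ Finset.Icc 1 n, fnBracket (M i) (M (n + 1 - i)) x y =
        ∑ i ∈ Finset.range n, fnBracket (M (i + 1)) (M (n + 1 - (i + 1))) x y := by
      rw [Finset.range_eq_Ico, Finset.sum_Ico_add'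
        (fun i => fnBracket (M i) (M (n + 1 - i)) x y) 0 n 1]
      rfl
    rw [Finset.sum_range_succ, Finset.sum_range_succ', hI, Nat.sub_self, Nat.sub_zero,
      fnBracket_symm (M (n + 1)) (M 0), two_smul]
    abel
  rw [key, neg_smul, ← smul_neg, eq_inv_smul_iff₀ (two_ne_zero' K), add_eq_zero_iff_eq_neg]

/-- An order-`n` deformation of a Nijenhuis operator `N` is extensible to order `n + 1`
if and only if the obstruction `Ob(N_t^n) = -(1/2) ∑_{i+j=n+1, i,j ≥ 1} [N_i, N_j]_FN`
is a coboundary `d_N f = [N, f]_FN`. -/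
theorem deformation_extensible_iff_obstruction_coboundary
    {K : Type*} [Field K] [CharZero K] {g : Type*} [LieRing g] [LieAlgebra K g]
    (N : g →ₗ[K] g) (hN : IsNijenhuis N) (n : ℕ) (Ns : ℕ → (g →ₗ[K] g))
    (h0 : Ns 0 = N)
    (hdef : ∀ p ≤ n, ∀ x y : g,
      ∑ i ∈ Finset.range (p + 1), fnBracket (Ns i) (Ns (p - i)) x y = 0) :
    (∃ Ns' : ℕ → (g →ₗ[K] g), (∀ i ≤ n, Ns' i = Ns i) ∧
      ∀ p ≤ n + 1, ∀ x y : g,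
        ∑ i ∈ Finset.range (p + 1), fnBracket (Ns' i) (Ns' (p - i)) x y = 0) ↔
    (∃ f : g →ₗ[K] g, ∀ x y : g,
      fnBracket N f x y =
        -(2 : K)⁻¹ • ∑ i ∈ Finset.Icc 1 n, fnBracket (Ns i) (Ns (n + 1 - i)) x y) := by
  constructor
  · rintro ⟨M, hM, hM0⟩
    refine ⟨M (n + 1), fun x y => ?_⟩
    have h := (sum_fnBracket_eq_zero_iff M n x y).1 (hM0 (n + 1) le_rfl x y)
    rw [hM 0 (Nat.zero_le n), h0] at h
    rw [h]
    congr 1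
    refine Finset.sum_congr rfl fun i hi => ?_
    rw [Finset.mem_Icc] at hi
    rw [hM i hi.2, hM (n + 1 - i) (by omega)]
  · rintro ⟨f, hf⟩
    have hM : ∀ i ≤ n, Function.update Ns (n + 1) f i = Ns i := fun i hi =>
      Function.update_of_ne (by omega) _ _
    refine ⟨Function.update Ns (n + 1) f, hM, fun p hp x y => ?_⟩
    rcases Nat.le_succ_iff.1 hp with hp | rfl
    · rw [← hdef p hp x y]
      refine Finset.sum_congr rfl fun i hi => ?_
      rw [Finset.mem_range] at hi
      rw [hM i (by omega), hM (p - i) (by omega)]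
    · refine (sum_fnBracket_eq_zero_iff _ n x y).2 ?_
      rw [hM 0 (Nat.zero_le n), h0, Function.update_self, hf x y]
      congr 1
      refine Finset.sum_congr rfl fun i hi => ?_
      rw [Finset.mem_Icc] at hi
      rw [hM i hi.2, hM (n + 1 - i) (by omega)]
end

section
/- Let g be a Lie algebra over a field k of characteristic zero, N : g → g a Nijenhuis operator, and let N_1, …, N_n : g → g be linear maps such that, setting N_0 = N, for every 0 ≤ p ≤ n one has Σ_{i+j=p} [N_i, N_j]_FN = 0. Then the antisymmetric bilinear map Ob := −(1/2) Σ_{i+j=n+1, i,j≥1} [N_i, N_j]_FN : g × g → g is a 2-cocycle of the Nijenhuis operator N, i.e. d_N(Ob) = 0, where for an antisymmetric bilinear map B : g × g → g, (d_N B)(x, y, z) := [N x, B(y, z)] − [N y, B(x, z)] + [N z, B(x, y)] − B([x, y]^N, z) + B([x, z]^N, y) − B([y, z]^N, x) − N([x, B(y, z)] − [y, B(x, z)] + [z, B(x, y)] − B([x, y], z) + B([x, z], y) − B([y, z], x)). -/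
/-- The differential `d_N` of the cochain complex of the Nijenhuis operator `N`,
applied to an (antisymmetric) bilinear map `B : g × g → g`. -/
def dN2 {K : Type*} [Field K] {g : Type*} [LieRing g] [LieAlgebra K g]
    (N : g →ₗ[K] g) (B : g → g → g) (x y z : g) : g :=
  ⁅N x, B y z⁆ - ⁅N y, B x z⁆ + ⁅N z, B x y⁆
    - B (nijBracket N x y) z + B (nijBracket N x z) y - B (nijBracket N y z) x
    - N (⁅x, B y z⁆ - ⁅y, B x z⁆ + ⁅z, B x y⁆
          - B ⁅x, y⁆ z + B ⁅x, z⁆ y - B ⁅y, z⁆ x)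

section
variable {K : Type*} [Field K] {g : Type*} [LieRing g] [LieAlgebra K g]

/-- Graded Jacobi identity for the Frölicher–Nijenhuis bracket of three linear maps. -/
theorem dN2_fnBracket_cyclic (P Q R : g →ₗ[K] g) (x y z : g) :
    dN2 P (fnBracket Q R) x y z + dN2 Q (fnBracket R P) x y z
      + dN2 R (fnBracket P Q) x y z = 0 := by
  -- A terminating rewriting system: outer brackets get their compound entry on the right, and the
  -- Jacobi identity removes the nested brackets whose outer entry comes from `x`.
  have sk (a b : g) : ⁅a, b⁆ = -⁅b, a⁆ := (lie_skew a b).symm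
  have s1 (a b c : g) : ⁅⁅a, b⁆, c⁆ = -⁅c, ⁅a, b⁆⁆ := sk _ _
  have s2 (A : g →ₗ[K] g) (a b c : g) : ⁅A ⁅a, b⁆, c⁆ = -⁅c, A ⁅a, b⁆⁆ := sk _ _
  have s3 (A B : g →ₗ[K] g) (a b c : g) : ⁅A (B ⁅a, b⁆), c⁆ = -⁅c, A (B ⁅a, b⁆)⁆ := sk _ _
  have J (a b c : g) : ⁅a, ⁅b, c⁆⁆ = ⁅b, ⁅a, c⁆⁆ - ⁅c, ⁅a, b⁆⁆ := by
    rw [leibniz_lie a b c, s1]; abel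
  have j1 : ⁅x, ⁅y, z⁆⁆ = _ := J _ _ _
  have j2 (C : g →ₗ[K] g) : ⁅x, ⁅y, C z⁆⁆ = _ := J _ _ _
  have j3 (B : g →ₗ[K] g) : ⁅x, ⁅B y, z⁆⁆ = _ := J _ _ _
  have j4 (B C : g →ₗ[K] g) : ⁅x, ⁅B y, C z⁆⁆ = _ := J _ _ _
  have j5 (A : g →ₗ[K] g) : ⁅A x, ⁅y, z⁆⁆ = _ := J _ _ _
  have j6 (A C : g →ₗ[K] g) : ⁅A x, ⁅y, C z⁆⁆ = _ := J _ _ _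
  have j7 (A B : g →ₗ[K] g) : ⁅A x, ⁅B y, z⁆⁆ = _ := J _ _ _
  have j8 (A B C : g →ₗ[K] g) : ⁅A x, ⁅B y, C z⁆⁆ = _ := J _ _ _
  simp only [dN2, fnBracket, nijBracket, map_add, map_sub, map_neg, lie_add, lie_sub,
    add_lie, sub_lie, s1, s2, s3, j1, j2, j3, j4, j5, j6, j7, j8]
  abel

theorem dN2_zero (N : g →ₗ[K] g) (x y z : g) : dN2 N (fun _ _ => 0) x y z = 0 := by
  simp [dN2]

theorem dN2_add (N : g →ₗ[K] g) (B C : g → g → g) (x y z : g) :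
    dN2 N (fun a b => B a b + C a b) x y z = dN2 N B x y z + dN2 N C x y z := by
  simp only [dN2, lie_add, map_add, map_sub]
  abel

theorem dN2_smul (N : g →ₗ[K] g) (c : K) (B : g → g → g) (x y z : g) :
    dN2 N (fun a b => c • B a b) x y z = c • dN2 N B x y z := by
  simp only [dN2, lie_smul, map_add, map_sub, map_smul]
  module

theorem dN2_sum {ι : Type*} (N : g →ₗ[K] g) (s : Finset ι) (B : ι → g → g → g) (x y z : g) :
    dN2 N (fun a b => ∑ i ∈ s, B i a b) x y z = ∑ i ∈ s, dN2 N (B i) x y z := by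
  classical
  induction s using Finset.induction_on with
  | empty => simpa using dN2_zero N x y z
  | insert i s hi ih =>
    simp only [Finset.sum_insert hi]
    rw [dN2_add N (B i) (fun a b => ∑ i ∈ s, B i a b), ih]

theorem fnBracket_zero_left (Q : g →ₗ[K] g) (a b : g) : fnBracket 0 Q a b = 0 := by
  simp [fnBracket]

theorem fnBracket_zero_right (P : g →ₗ[K] g) (a b : g) : fnBracket P 0 a b = 0 := by
  simp [fnBracket]

/-- A function on triples whose cyclic sums vanish sums to zero over `i + j + k = m`, provided
`3` is invertible. -/
theorem sum_triple_eq_zero [CharZero K] (t : ℕ → ℕ → ℕ → g)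
    (ht : ∀ i j k, t i j k + t j k i + t k i j = 0) (m : ℕ) :
    ∑ i ∈ Finset.range (m + 1), ∑ j ∈ Finset.range (m - i + 1), t i j (m - i - j) = 0 := by
  -- On the cube `[0, m]³` with an indicator, cyclic reindexing is just an exchange of sums.
  let f : ℕ → ℕ → ℕ → g := fun i j k => if i + j + k = m then t i j k else 0
  let s := Finset.range (m + 1)
  have hf (i j k : ℕ) : f i j k + f j k i + f k i j = 0 := by
    have e1 : j + k + i = i + j + k := by ring
    have e2 : k + i + j = i + j + k := by ring
    simp only [f, e1, e2]
    split_ifs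
    · exact ht i j k
    · simp
  have hS : ∑ i ∈ s, ∑ j ∈ Finset.range (m - i + 1), t i j (m - i - j)
      = ∑ i ∈ s, ∑ j ∈ s, ∑ k ∈ s, f i j k := by
    refine Finset.sum_congr rfl fun i hi => ?_
    have hi' : i < m + 1 := Finset.mem_range.1 hi
    have hsub : Finset.range (m - i + 1) ⊆ s := Finset.range_subset_range.2 (by omega)
    rw [← Finset.sum_subset hsub]
    · refine Finset.sum_congr rfl fun j hj => ?_
      have hj' := Finset.mem_range.1 hj
      rw [Finset.sum_eq_single (m - i - j)]
      · exact (if_pos (by omega)).symm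
      · intro k _ hk
        exact if_neg (by omega)
      · intro h
        exact absurd (Finset.mem_range.2 (by omega)) h
    · intro j _ hj
      have hj' : ¬ j < m - i + 1 := fun h => hj (Finset.mem_range.2 h)
      exact Finset.sum_eq_zero fun k _ => if_neg (by omega)
  have h1 : ∑ i ∈ s, ∑ j ∈ s, ∑ k ∈ s, f k i j = ∑ i ∈ s, ∑ j ∈ s, ∑ k ∈ s, f i j k := by
    rw [Finset.sum_congr rfl fun i _ => Finset.sum_comm, Finset.sum_comm]
  have h2 : ∑ i ∈ s, ∑ j ∈ s, ∑ k ∈ s, f j k i = ∑ i ∈ s, ∑ j ∈ s, ∑ k ∈ s, f i j k := by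
    rw [Finset.sum_comm, Finset.sum_congr rfl fun i _ => Finset.sum_comm]
  have h3 : ∑ i ∈ s, ∑ j ∈ s, ∑ k ∈ s, (f i j k + f j k i + f k i j) = 0 :=
    Finset.sum_eq_zero fun i _ => Finset.sum_eq_zero fun j _ => Finset.sum_eq_zero fun k _ =>
      hf i j k
  simp only [Finset.sum_add_distrib] at h3
  rw [h1, h2, ← hS] at h3
  have h4 : (3 : K) • ∑ i ∈ s, ∑ j ∈ Finset.range (m - i + 1), t i j (m - i - j) = 0 := by
    rw [← h3]; module
  exact (smul_eq_zero.1 h4).resolve_left (by norm_num)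

end

/-- For an order-`n` deformation of the Nijenhuis operator `N`, the obstruction
`Ob = -(1/2) ∑_{i+j=n+1, i,j ≥ 1} [N_i, N_j]_FN` is a 2-cocycle of `N`: `d_N(Ob) = 0`. -/
theorem obstruction_is_two_cocycle
    {K : Type*} [Field K] [CharZero K] {g : Type*} [LieRing g] [LieAlgebra K g]
    (N : g →ₗ[K] g) (hN : IsNijenhuis N) (n : ℕ) (Ns : ℕ → (g →ₗ[K] g))
    (h0 : Ns 0 = N)
    (hdef : ∀ p ≤ n, ∀ x y : g,
      ∑ i ∈ Finset.range (p + 1), fnBracket (Ns i) (Ns (p - i)) x y = 0) :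
    ∀ x y z : g,
      dN2 N (fun a b =>
        -(2 : K)⁻¹ • ∑ i ∈ Finset.Icc 1 n, fnBracket (Ns i) (Ns (n + 1 - i)) a b) x y z = 0 := by
  intro x y z
  let M : ℕ → (g →ₗ[K] g) := fun i => if i ≤ n then Ns i else 0
  have hM (i : ℕ) (hi : i ≤ n) : M i = Ns i := if_pos hi
  have hM' : M (n + 1) = 0 := if_neg (by omega)
  have hOb (a b : g) : ∑ i ∈ Finset.Icc 1 n, fnBracket (Ns i) (Ns (n + 1 - i)) a b
      = ∑ j ∈ Finset.range (n + 1 + 1), fnBracket (M j) (M (n + 1 - j)) a b := by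
    -- The extra terms `j = 0` and `j = n + 1` contain `M (n + 1) = 0`.
    refine (Finset.sum_congr rfl fun i hi => ?_).trans
      (Finset.sum_subset (fun i hi => ?_) fun j hj hj' => ?_)
    · have := Finset.mem_Icc.1 hi
      rw [hM i (by omega), hM (n + 1 - i) (by omega)]
    · have := Finset.mem_Icc.1 hi
      exact Finset.mem_range.2 (by omega)
    · have h1 := Finset.mem_range.1 hj
      have h2 : ¬ (1 ≤ j ∧ j ≤ n) := fun h => hj' (Finset.mem_Icc.2 h)
      rcases (by omega : j = 0 ∨ j = n + 1) with rfl | rfl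
      · rw [Nat.sub_zero, hM', fnBracket_zero_right]
      · rw [hM', fnBracket_zero_left]
  have key := sum_triple_eq_zero (K := K)
    (fun i j k => dN2 (M i) (fnBracket (M j) (M k)) x y z)
    (fun i j k => dN2_fnBracket_cyclic (M i) (M j) (M k) x y z) (n + 1)
  simp only [← dN2_sum] at key
  rw [Finset.sum_eq_single 0] at key
  · rw [dN2_smul]
    simp only [hOb]
    rw [hM 0 (Nat.zero_le n), h0] at key
    simp only [Nat.sub_zero] at key
    rw [key, smul_zero]
  · intro i hi hi0
    have := Finset.mem_range.1 hi
    have hz : (fun a b : g => ∑ j ∈ Finset.range (n + 1 - i + 1),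
        fnBracket (M j) (M (n + 1 - i - j)) a b) = fun _ _ => 0 := by
      funext a b
      rw [← hdef (n + 1 - i) (by omega) a b]
      refine Finset.sum_congr rfl fun j hj => ?_
      have := Finset.mem_range.1 hj
      rw [hM j (by omega), hM (n + 1 - i - j) (by omega)]
    rw [hz, dN2_zero]
  · intro h
    exact absurd (Finset.mem_range.2 (by omega)) h
end

section
/- Let g be a Lie algebra over a field k, (V, ρ) a representation of g, and r : V → g a linear map. Consider the semidirect product Lie bracket on g ⊕ V given by [(x, u), (y, v)] := ([x, y], ρ_x v − ρ_y u), and the lift r̃ : g ⊕ V → g ⊕ V, r̃(x, v) := (r(v), 0). Then r is a relative Rota–Baxter operator, i.e. [r(u), r(v)] = r(ρ_{r(u)} v − ρ_{r(v)} u) for all u, v ∈ V, if and only if r̃ is a Nijenhuis operator on the semidirect product Lie algebra (g ⊕ V, [·,·]). -/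
/-- The semidirect product Lie bracket on `g × V` associated to a representation `ρ`. -/
def sdBracket {K : Type*} [Field K] {g : Type*} [LieRing g] [LieAlgebra K g]
    {V : Type*} [AddCommGroup V] [Module K V]
    (ρ : g →ₗ[K] V →ₗ[K] V) (p q : g × V) : g × V :=
  (⁅p.1, q.1⁆, ρ p.1 q.2 - ρ q.1 p.2)

/-- A linear map `r : V → g` is a relative Rota–Baxter operator with respect to a
representation `(V, ρ)` if and only if its lift `r̃(x, v) = (r v, 0)` is a Nijenhuis
operator on the semidirect product Lie algebra `g ⊕ V`. -/
theorem relativeRotaBaxter_iff_lift_nijenhuis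
    {K : Type*} [Field K] {g : Type*} [LieRing g] [LieAlgebra K g]
    {V : Type*} [AddCommGroup V] [Module K V]
    (ρ : g →ₗ[K] V →ₗ[K] V)
    (hρ : ∀ x y : g, ρ ⁅x, y⁆ = ρ x ∘ₗ ρ y - ρ y ∘ₗ ρ x)
    (r : V →ₗ[K] g) :
    (∀ u v : V, ⁅r u, r v⁆ = r (ρ (r u) v - ρ (r v) u)) ↔
    (∀ p q : g × V,
      sdBracket ρ ((fun s : g × V => ((r s.2 : g), (0 : V))) p)
          ((fun s : g × V => ((r s.2 : g), (0 : V))) q) =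
        (fun s : g × V => ((r s.2 : g), (0 : V)))
          (sdBracket ρ ((fun s : g × V => ((r s.2 : g), (0 : V))) p) q +
            sdBracket ρ p ((fun s : g × V => ((r s.2 : g), (0 : V))) q) -
            (fun s : g × V => ((r s.2 : g), (0 : V))) (sdBracket ρ p q))) := by
  -- The lift kills `g`, has image in `g`, and squares to zero, so the Nijenhuis identity at
  -- `(x, u), (y, v)` has zero `V`-component and its `g`-component is the Rota–Baxter identity
  -- at `u, v`, independently of `x` and `y`.
  have key : ∀ u v : V,
      ρ (r u) v + -ρ (r v) u = ρ (r u) v - ρ (r v) u := fun u v => (sub_eq_add_neg _ _).symm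
  constructor
  · rintro h ⟨x, u⟩ ⟨y, v⟩
    simp [sdBracket, h, key]
  · intro h u v
    simpa [sdBracket, key] using congrArg Prod.fst (h (0, u) (0, v))
end

section
/- Let g be a Lie algebra over a field k with Nijenhuis operator N : g → g, and let (V, ρ, S) be a Nijenhuis representation of (g, N). Then the direct sum g ⊕ V with the semidirect product bracket [(x, u), (y, v)] := ([x, y], ρ_x v − ρ_y u) is a Lie algebra, and the map N ⊕ S : g ⊕ V → g ⊕ V, (x, v) ↦ (N x, S v), is a Nijenhuis operator on it. -/
/-!
All three identities are checked componentwise on `g × V`. The `g`-components are skew-symmetry,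
the Jacobi identity and the Nijenhuis identity of `g` itself. The `V`-component of the Jacobi
identity cancels once each `ρ ⁅x, y⁆` is expanded as a commutator, and the `V`-component of the
Nijenhuis identity for `(x, u)`, `(y, v)` is the compatibility of `S` at `(x, v)` minus the one
at `(y, u)`.
-/

/-- `N` is a Nijenhuis operator on the Lie algebra `g`. -/
def IsNijenhuis' {K : Type*} [Field K] {g : Type*} [LieRing g] [LieAlgebra K g]
    (N : g →ₗ[K] g) : Prop :=
  ∀ x y : g, ⁅N x, N y⁆ = N (⁅N x, y⁆ + ⁅x, N y⁆ - N ⁅x, y⁆)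

/-- For a Nijenhuis Lie algebra `(g, N)` and a Nijenhuis representation `(V, ρ, S)`, the
semidirect product bracket on `g ⊕ V` is a Lie bracket and `N ⊕ S` is a Nijenhuis
operator on it. -/
theorem semidirect_nijenhuis
    {K : Type*} [Field K] {g : Type*} [LieRing g] [LieAlgebra K g]
    {V : Type*} [AddCommGroup V] [Module K V]
    (N : g →ₗ[K] g) (hN : IsNijenhuis' N)
    (ρ : g →ₗ[K] V →ₗ[K] V)
    (hρ : ∀ x y : g, ρ ⁅x, y⁆ = ρ x ∘ₗ ρ y - ρ y ∘ₗ ρ x)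
    (S : V →ₗ[K] V)
    (hS : ∀ (x : g) (v : V), ρ (N x) (S v) = S (ρ (N x) v + ρ x (S v) - S (ρ x v))) :
    (∀ p q : g × V, sdBracket ρ p q = - sdBracket ρ q p) ∧
    (∀ p q s : g × V,
      sdBracket ρ (sdBracket ρ p q) s + sdBracket ρ (sdBracket ρ q s) p +
        sdBracket ρ (sdBracket ρ s p) q = 0) ∧
    (∀ p q : g × V,
      sdBracket ρ (N p.1, S p.2) (N q.1, S q.2) =
        (fun s : g × V => (N s.1, S s.2))
          (sdBracket ρ (N p.1, S p.2) q + sdBracket ρ p (N q.1, S q.2) -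
            (fun s : g × V => (N s.1, S s.2)) (sdBracket ρ p q))) := by
  refine ⟨fun p q => ?_, fun p q s => ?_, fun p q => ?_⟩
  · apply Prod.ext
    · exact (lie_skew p.1 q.1).symm
    · simp [sdBracket]
  · apply Prod.ext
    · have h := lie_jacobi p.1 q.1 s.1
      rw [← lie_skew p.1 ⁅_, _⁆, ← lie_skew q.1 ⁅_, _⁆, ← lie_skew s.1 ⁅_, _⁆] at h
      simp only [sdBracket, Prod.fst_add, Prod.fst_zero]
      rw [← neg_eq_zero, ← h]
      abel
    · simp only [sdBracket, Prod.snd_add, Prod.snd_zero, hρ, LinearMap.sub_apply,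
        LinearMap.comp_apply, map_sub]
      abel
  · apply Prod.ext
    · exact hN p.1 q.1
    · simp only [sdBracket, Prod.snd_add, Prod.snd_sub, hS, map_sub, map_add]
      abel
end

section
/- Let g be a Lie algebra over a field k with Nijenhuis operator N : g → g, and let (V, ρ) be a representation of g. Suppose S : V → V is a linear map admissible to (g, N) and (V, ρ), i.e. S(ρ_{N x} v) + ρ_x(S² v) = ρ_{N x}(S v) + S(ρ_x(S v)) for all x ∈ g, v ∈ V. Then the triple (V*, ρ*, S*) is a Nijenhuis representation of (g, N), where V* is the dual space, (ρ*_x α)(v) := −α(ρ_x v) and S* is the transpose of S; that is, ρ*_{N x}(S* α) = S*(ρ*_{N x} α + ρ*_x(S* α) − S*(ρ*_x α)) for all x ∈ g, α ∈ V*. -/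
/-- The dual representation `(ρ*_x α)(v) = -α(ρ_x v)` on the dual space `V*`. -/
def dualRep {K : Type*} [Field K] {g : Type*} [LieRing g] [LieAlgebra K g]
    {V : Type*} [AddCommGroup V] [Module K V]
    (ρ : g →ₗ[K] V →ₗ[K] V) (x : g) (α : Module.Dual K V) : Module.Dual K V :=
  -(α ∘ₗ ρ x)

/-- The transpose `S* α = α ∘ S` of a linear map `S : V → V`, acting on `V*`. -/
def transposeMap {K : Type*} [Field K] {V : Type*} [AddCommGroup V] [Module K V]
    (S : V →ₗ[K] V) (α : Module.Dual K V) : Module.Dual K V :=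
  α ∘ₗ S

/-- If `S : V → V` is admissible to the Nijenhuis Lie algebra `(g, N)` and the
representation `(V, ρ)`, i.e. `S(ρ_{N x} v) + ρ_x(S² v) = ρ_{N x}(S v) + S(ρ_x(S v))`,
then `(V*, ρ*, S*)` is a Nijenhuis representation of `(g, N)`:
`ρ*_{N x}(S* α) = S*(ρ*_{N x} α + ρ*_x(S* α) − S*(ρ*_x α))`. -/
theorem dual_nijenhuis_representation
    {K : Type*} [Field K] {g : Type*} [LieRing g] [LieAlgebra K g]
    {V : Type*} [AddCommGroup V] [Module K V]
    (N : g →ₗ[K] g) (hN : IsNijenhuis N)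
    (ρ : g →ₗ[K] V →ₗ[K] V)
    (hρ : ∀ x y : g, ρ ⁅x, y⁆ = ρ x ∘ₗ ρ y - ρ y ∘ₗ ρ x)
    (S : V →ₗ[K] V)
    (hadm : ∀ (x : g) (v : V),
      S (ρ (N x) v) + ρ x (S (S v)) = ρ (N x) (S v) + S (ρ x (S v))) :
    ∀ (x : g) (α : Module.Dual K V),
      dualRep ρ (N x) (transposeMap S α) =
        transposeMap S
          (dualRep ρ (N x) α + dualRep ρ x (transposeMap S α) -
            transposeMap S (dualRep ρ x α)) := by
  intro x α
  ext v
  -- The admissibility identity at `v`, paired with `α`.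
  have h := congrArg α (hadm x v)
  simp only [map_add] at h
  simp only [dualRep, transposeMap, LinearMap.neg_apply, LinearMap.comp_apply,
    LinearMap.add_apply, LinearMap.sub_apply]
  linear_combination -h
end

section
/- Let g be a Lie algebra over a field k and N : g → g a Nijenhuis operator. For a linear map f : g → g define (∂^N f)(x) := f(N x) − N(f x), the Chevalley–Eilenberg differential (δ_CE f)(x, y) := [x, f y] − [y, f x] − f[x, y], and for a bilinear map B : g × g → g define (∂^N B)(x, y) := B(N x, N y) − N(B(x, N y)) − N(B(N x, y)) + N²(B(x, y)). Then for every linear f : g → g, d_N(∂^N f) = ∂^N(δ_CE f) as bilinear maps g × g → g, where d_N g' := [N, g']_FN for a linear map g'. -/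
/-- The Chevalley–Eilenberg differential of a linear map `f : g → g`
(adjoint coefficients): `(δ_CE f)(x, y) = [x, f y] − [y, f x] − f [x, y]`. -/
def ceDiff {K : Type*} [Field K] {g : Type*} [LieRing g] [LieAlgebra K g]
    (f : g →ₗ[K] g) (x y : g) : g :=
  ⁅x, f y⁆ - ⁅y, f x⁆ - f ⁅x, y⁆

/-- `∂^N` applied to a bilinear map `B`:
`(∂^N B)(x, y) = B(N x, N y) − N(B(x, N y)) − N(B(N x, y)) + N²(B(x, y))`. -/
def partialN2 {K : Type*} [Field K] {g : Type*} [LieRing g] [LieAlgebra K g]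
    (N : g →ₗ[K] g) (B : g → g → g) (x y : g) : g :=
  B (N x) (N y) - N (B x (N y)) - N (B (N x) y) + N (N (B x y))

/-- For a Nijenhuis operator `N` and any linear map `f : g → g`,
`d_N(∂^N f) = ∂^N(δ_CE f)`, where `∂^N f = f ∘ N − N ∘ f` and `d_N g' = [N, g']_FN`. -/
theorem dN_partialN_eq_partialN_ceDiff
    {K : Type*} [Field K] {g : Type*} [LieRing g] [LieAlgebra K g]
    (N : g →ₗ[K] g) (hN : IsNijenhuis N) (f : g →ₗ[K] g) :
    ∀ x y : g,
      fnBracket N (f ∘ₗ N - N ∘ₗ f) x y = partialN2 N (ceDiff f) x y := by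
  intro x y
  have h : f ⁅N x, N y⁆ = f (N (⁅N x, y⁆ + ⁅x, N y⁆ - N ⁅x, y⁆)) := by rw [hN x y]
  -- Turn `-⁅y, f x⁆` into `⁅f x, y⁆`, so that the Nijenhuis identity applies to `(f x, y)`.
  have s : ∀ u v : g, ceDiff f u v = ⁅u, f v⁆ + ⁅f u, v⁆ - f ⁅u, v⁆ := fun u v => by
    rw [ceDiff, ← lie_skew (f u) v, sub_eq_add_neg ⁅u, f v⁆]
  -- The terms with `f` outside the bracket match by `h`; the terms `⁅N x, N (f y)⁆` and
  -- `⁅N (f x), N y⁆` cancel the rest by the Nijenhuis identity at `(x, f y)` and `(f x, y)`.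
  simp only [fnBracket, partialN2, s, LinearMap.sub_apply, LinearMap.comp_apply, lie_sub,
    sub_lie, h, hN x (f y), hN (f x) y, map_add, map_sub]
  abel
end

section
/- Let (g, [·,·]_g, N) and (h, [·,·]_h, S) be Nijenhuis Lie algebras over a field k, t : h → g a Lie algebra homomorphism with t ∘ S = N ∘ t, and ρ : g → Der(h) a Lie algebra homomorphism into the derivations of h such that (h, ρ, S) is a Nijenhuis representation of (g, N), t(ρ_x h) = [x, t(h)]_g and ρ_{t(h)} k = [h, k]_h for all x ∈ g, h, k ∈ h (a crossed module of Nijenhuis Lie algebras). Define ρ¹_x(h) := ρ_{N x} h + ρ_x(S h) − S(ρ_x h). Then (g^N, h^S, t, ρ¹) is a crossed module of Lie algebras: (1) t([h, k]_h^S) = [t(h), t(k)]_g^N for all h, k ∈ h; (2) ρ¹ is a Lie algebra homomorphism from (g, [·,·]_g^N) to the derivations of (h, [·,·]_h^S); (3) t(ρ¹_x h) = [x, t(h)]_g^N; and (4) ρ¹_{t(h)} k = [h, k]_h^S. -/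
/-- A crossed module of Nijenhuis Lie algebras `((g,N), (h,S), t, ρ)` induces a crossed
module of Lie algebras `(g^N, h^S, t, ρ¹)` with `ρ¹_x(a) = ρ_{N x} a + ρ_x(S a) − S(ρ_x a)`. -/
theorem crossed_module_deformed
    {K : Type*} [Field K] {g : Type*} [LieRing g] [LieAlgebra K g]
    {h : Type*} [LieRing h] [LieAlgebra K h]
    (N : g →ₗ[K] g) (hN : IsNijenhuis N)
    (S : h →ₗ[K] h) (hS : IsNijenhuis S)
    (t : h →ₗ[K] g)
    (ht : ∀ a b : h, t ⁅a, b⁆ = ⁅t a, t b⁆)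
    (htS : ∀ a : h, t (S a) = N (t a))
    (ρ : g →ₗ[K] h →ₗ[K] h)
    (hρder : ∀ (x : g) (a b : h), ρ x ⁅a, b⁆ = ⁅ρ x a, b⁆ + ⁅a, ρ x b⁆)
    (hρhom : ∀ x y : g, ρ ⁅x, y⁆ = ρ x ∘ₗ ρ y - ρ y ∘ₗ ρ x)
    (hnijrep : ∀ (x : g) (a : h),
      ρ (N x) (S a) = S (ρ (N x) a + ρ x (S a) - S (ρ x a)))
    (hcm1 : ∀ (x : g) (a : h), t (ρ x a) = ⁅x, t a⁆)
    (hcm2 : ∀ a b : h, ρ (t a) b = ⁅a, b⁆) :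
    -- `ρ¹_x(a) = ρ_{N x} a + ρ_x(S a) − S(ρ_x a)`
    (∀ a b : h, t (nijBracket S a b) = nijBracket N (t a) (t b)) ∧
    (∀ (x : g) (a b : h),
      (ρ (N x) (nijBracket S a b) + ρ x (S (nijBracket S a b)) -
          S (ρ x (nijBracket S a b))) =
        nijBracket S (ρ (N x) a + ρ x (S a) - S (ρ x a)) b +
          nijBracket S a (ρ (N x) b + ρ x (S b) - S (ρ x b))) ∧
    (∀ (x y : g) (a : h),
      (ρ (N (nijBracket N x y)) a + ρ (nijBracket N x y) (S a) -
          S (ρ (nijBracket N x y) a)) =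
        (ρ (N x) (ρ (N y) a + ρ y (S a) - S (ρ y a)) +
            ρ x (S (ρ (N y) a + ρ y (S a) - S (ρ y a))) -
            S (ρ x (ρ (N y) a + ρ y (S a) - S (ρ y a)))) -
          (ρ (N y) (ρ (N x) a + ρ x (S a) - S (ρ x a)) +
            ρ y (S (ρ (N x) a + ρ x (S a) - S (ρ x a))) -
            S (ρ y (ρ (N x) a + ρ x (S a) - S (ρ x a))))) ∧
    (∀ (x : g) (a : h),
      t (ρ (N x) a + ρ x (S a) - S (ρ x a)) = nijBracket N x (t a)) ∧
    (∀ a b : h,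
      (ρ (N (t a)) b + ρ (t a) (S b) - S (ρ (t a) b)) = nijBracket S a b) := by
  have hSb : ∀ a b : h, S (nijBracket S a b) = ⁅S a, S b⁆ := fun a b => (hS a b).symm
  have hNb : ∀ x y : g, N (nijBracket N x y) = ⁅N x, N y⁆ := fun x y => (hN x y).symm
  have hρ : ∀ (x y : g) (a : h), ρ ⁅x, y⁆ a = ρ x (ρ y a) - ρ y (ρ x a) := fun x y a => by
    rw [hρhom]; rfl
  refine ⟨fun a b => ?_, fun x a b => ?_, fun x y a => ?_, fun x a => ?_, fun a b => ?_⟩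
  · simp only [nijBracket, map_add, map_sub, ht, htS]
  ·
    -- The mixed Jacobi identity for the deformed bracket at `x, a, b`.
    rw [hSb]
    have e1 := hnijrep x ⁅a, b⁆
    have e2 := hS (ρ x a) b
    have e3 := hS a (ρ x b)
    simp only [nijBracket, ← hnijrep]
    simp only [map_add, map_sub, hρder, lie_add, add_lie, lie_sub, sub_lie] at e1 e2 e3 ⊢
    rw [e1, e2, e3]
    abel
  ·
    -- The mixed Jacobi identity for the deformed bracket at `x, y, a`.
    rw [hNb]
    have e1 := hnijrep x (ρ y a)
    have e2 := hnijrep y (ρ x a)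
    have e3 := hnijrep ⁅x, y⁆ a
    rw [← hnijrep, ← hnijrep]
    simp only [nijBracket, map_add, map_sub, LinearMap.add_apply, LinearMap.sub_apply, hρ]
      at e1 e2 e3 ⊢
    rw [e1, e2, e3]
    abel
  · simp only [nijBracket, map_add, map_sub, hcm1, htS]
  · simp only [nijBracket, ← htS, hcm2]
end

section
/- Let ((g, [·,·]_g, N), (h, [·,·]_h, S), ρ, ν) be a matched pair of Nijenhuis Lie algebras over a field k. Then g ⊕ h equipped with the bicrossed product bracket [(x, h), (y, k)]_⋈ := ([x, y]_g + ν_h y − ν_k x, [h, k]_h + ρ_x k − ρ_y h) is a Lie algebra, and the map N ⊕ S : (x, h) ↦ (N x, S h) is a Nijenhuis operator on it; that is, (g ⊕ h, [·,·]_⋈, N ⊕ S) is a Nijenhuis Lie algebra. -/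
/-- The bicrossed product bracket on `g × h` associated to a matched pair `(ρ, ν)`. -/
def bcBracket {K : Type*} [Field K]
    {g : Type*} [LieRing g] [LieAlgebra K g] {h : Type*} [LieRing h] [LieAlgebra K h]
    (ρ : g →ₗ[K] h →ₗ[K] h) (ν : h →ₗ[K] g →ₗ[K] g) (p q : g × h) : g × h :=
  (⁅p.1, q.1⁆ + ν p.2 q.1 - ν q.2 p.1, ⁅p.2, q.2⁆ + ρ p.1 q.2 - ρ q.1 p.2)

/-- The first component of the Jacobi identity for the bicrossed product bracket. -/
theorem bcBracket_jacobi_fst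
    {K : Type*} [Field K]
    {g : Type*} [LieRing g] [LieAlgebra K g] {h : Type*} [LieRing h] [LieAlgebra K h]
    (ρ : g →ₗ[K] h →ₗ[K] h) (ν : h →ₗ[K] g →ₗ[K] g)
    (hν : ∀ a b : h, ν ⁅a, b⁆ = ν a ∘ₗ ν b - ν b ∘ₗ ν a)
    (hmp : ∀ (a : h) (x y : g),
      ν a ⁅x, y⁆ = ⁅ν a x, y⁆ + ⁅x, ν a y⁆ + ν (ρ y a) x - ν (ρ x a) y)
    (x y z : g) (a b c : h) :
    (⁅⁅x, y⁆ + ν a y - ν b x, z⁆ + ν (⁅a, b⁆ + ρ x b - ρ y a) z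
        - ν c (⁅x, y⁆ + ν a y - ν b x)) +
      (⁅⁅y, z⁆ + ν b z - ν c y, x⁆ + ν (⁅b, c⁆ + ρ y c - ρ z b) x
        - ν a (⁅y, z⁆ + ν b z - ν c y)) +
      (⁅⁅z, x⁆ + ν c x - ν a z, y⁆ + ν (⁅c, a⁆ + ρ z a - ρ x c) y
        - ν b (⁅z, x⁆ + ν c x - ν a z)) = 0 := by
  have hJ : ⁅⁅x, y⁆, z⁆ = -⁅⁅y, z⁆, x⁆ - ⁅⁅z, x⁆, y⁆ := by
    have := lie_jacobi x y z
    rw [← lie_skew x ⁅y, z⁆, ← lie_skew y ⁅z, x⁆, ← lie_skew z ⁅x, y⁆] at this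
    rw [← sub_eq_zero, ← neg_eq_zero, ← this]
    abel
  simp only [map_add, map_sub, LinearMap.add_apply, LinearMap.sub_apply, hν, hmp,
    LinearMap.comp_apply, add_lie, sub_lie, hJ]
  rw [← lie_skew x (ν c y), ← lie_skew y (ν a z), ← lie_skew z (ν b x)]
  abel

/-- The first component of the Nijenhuis identity for `N ⊕ S`. -/
theorem bcBracket_nijenhuis_fst
    {K : Type*} [Field K]
    {g : Type*} [LieRing g] [LieAlgebra K g] {h : Type*} [LieRing h] [LieAlgebra K h]
    (N : g →ₗ[K] g) (hN : IsNijenhuis N) (S : h →ₗ[K] h)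
    (ν : h →ₗ[K] g →ₗ[K] g)
    (hnr : ∀ (a : h) (x : g),
      ν (S a) (N x) = N (ν (S a) x + ν a (N x) - N (ν a x)))
    (x y : g) (a b : h) :
    ⁅N x, N y⁆ + ν (S a) (N y) - ν (S b) (N x) =
      N ((⁅N x, y⁆ + ν (S a) y - ν b (N x)) + (⁅x, N y⁆ + ν a (N y) - ν (S b) x)
        - N (⁅x, y⁆ + ν a y - ν b x)) := by
  rw [hN x y, hnr, hnr]
  simp only [map_add, map_sub]
  abel

/-- For a matched pair of Nijenhuis Lie algebras `((g, N), (h, S), ρ, ν)`, the bicrossed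
product bracket on `g ⊕ h` is a Lie bracket and `N ⊕ S` is a Nijenhuis operator on it. -/
theorem bicrossed_product_nijenhuis
    {K : Type*} [Field K]
    {g : Type*} [LieRing g] [LieAlgebra K g] {h : Type*} [LieRing h] [LieAlgebra K h]
    (N : g →ₗ[K] g) (hN : IsNijenhuis N)
    (S : h →ₗ[K] h) (hS : IsNijenhuis S)
    (ρ : g →ₗ[K] h →ₗ[K] h)
    (hρ : ∀ x y : g, ρ ⁅x, y⁆ = ρ x ∘ₗ ρ y - ρ y ∘ₗ ρ x)
    (ν : h →ₗ[K] g →ₗ[K] g)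
    (hν : ∀ a b : h, ν ⁅a, b⁆ = ν a ∘ₗ ν b - ν b ∘ₗ ν a)
    (hmp1 : ∀ (x : g) (a b : h),
      ρ x ⁅a, b⁆ = ⁅ρ x a, b⁆ + ⁅a, ρ x b⁆ + ρ (ν b x) a - ρ (ν a x) b)
    (hmp2 : ∀ (a : h) (x y : g),
      ν a ⁅x, y⁆ = ⁅ν a x, y⁆ + ⁅x, ν a y⁆ + ν (ρ y a) x - ν (ρ x a) y)
    (hnr1 : ∀ (x : g) (a : h),
      ρ (N x) (S a) = S (ρ (N x) a + ρ x (S a) - S (ρ x a)))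
    (hnr2 : ∀ (a : h) (x : g),
      ν (S a) (N x) = N (ν (S a) x + ν a (N x) - N (ν a x))) :
    (∀ p q : g × h, bcBracket ρ ν p q = - bcBracket ρ ν q p) ∧
    (∀ p q s : g × h,
      bcBracket ρ ν (bcBracket ρ ν p q) s + bcBracket ρ ν (bcBracket ρ ν q s) p +
        bcBracket ρ ν (bcBracket ρ ν s p) q = 0) ∧
    (∀ p q : g × h,
      bcBracket ρ ν (N p.1, S p.2) (N q.1, S q.2) =
        (fun s : g × h => (N s.1, S s.2))
          (bcBracket ρ ν (N p.1, S p.2) q + bcBracket ρ ν p (N q.1, S q.2) -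
            (fun s : g × h => (N s.1, S s.2)) (bcBracket ρ ν p q))) := by
  refine ⟨?_, ?_, ?_⟩
  · rintro ⟨x, a⟩ ⟨y, b⟩
    ext
    · simp only [bcBracket, Prod.fst_neg, ← lie_skew x y]
      abel
    · simp only [bcBracket, Prod.snd_neg, ← lie_skew a b]
      abel
  · rintro ⟨x, a⟩ ⟨y, b⟩ ⟨z, c⟩
    exact Prod.ext (bcBracket_jacobi_fst ρ ν hν hmp2 x y z a b c)
      (bcBracket_jacobi_fst ν ρ hρ hmp1 a b c x y z)
  · rintro ⟨x, a⟩ ⟨y, b⟩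
    exact Prod.ext (bcBracket_nijenhuis_fst N hN S ν hnr2 x y a b)
      (bcBracket_nijenhuis_fst S hS N ρ hnr1 a b x y)
end

section
/- Let g be a Lie algebra over a field k and N : g → g a Nijenhuis operator. Then the operations x ⋄ y := [N x, y] and ⌊x, y⌋ := −N[x, y] make g an NS-Lie algebra: ⌊·,·⌋ is antisymmetric, and for all x, y, z ∈ g, (x ⋄ y) ⋄ z − x ⋄ (y ⋄ z) + ⌊x, y⌋ ⋄ z = (y ⋄ x) ⋄ z − y ⋄ (x ⋄ z), and ⌊x, ⟦y, z⟧⌋ + ⌊y, ⟦z, x⟧⌋ + ⌊z, ⟦x, y⟧⌋ + x ⋄ ⌊y, z⌋ + y ⋄ ⌊z, x⌋ + z ⋄ ⌊x, y⌋ = 0, where ⟦x, y⟧ := x ⋄ y − y ⋄ x + ⌊x, y⌋. -/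
/-!
Both axioms combine the Nijenhuis identity with the Jacobi identity.

For (NSL1), the Nijenhuis identity rewrites the sum of the terms of the form `⁅N _, z⁆` as
`⁅⁅N x, N y⁆, z⁆`, and what remains is the Leibniz form of Jacobi for `N x`, `N y`, `z`.

For (NSL2), the Nijenhuis identity applied to `⁅N x, N ⁅y, z⁆⁆` and its cyclic permutations
puts everything under `N`. The terms `⁅x, N ⁅y, z⁆⁆` cancel, and what remains is `-N` applied to
`J (N x) y z + J x (N y) z + J x y (N z) - N (J x y z)`, where `J` denotes the Jacobi sum.
-/

/-- A Nijenhuis operator `N` on a Lie algebra `g` induces an NS-Lie algebra structure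
with `x ⋄ y = [N x, y]` and `⌊x, y⌋ = −N[x, y]`: the second operation is antisymmetric
and the axioms (NSL1), (NSL2) hold, where `⟦x, y⟧ = x ⋄ y − y ⋄ x + ⌊x, y⌋`. -/
theorem induced_NS_lie_algebra
    {K : Type*} [Field K] {g : Type*} [LieRing g] [LieAlgebra K g]
    (N : g →ₗ[K] g)
    (hN : ∀ x y : g, ⁅N x, N y⁆ = N (⁅N x, y⁆ + ⁅x, N y⁆ - N ⁅x, y⁆)) :
    (∀ x y : g, -N ⁅x, y⁆ = -(-N ⁅y, x⁆)) ∧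
    (∀ x y z : g,
      ⁅N ⁅N x, y⁆, z⁆ - ⁅N x, ⁅N y, z⁆⁆ + ⁅N (-N ⁅x, y⁆), z⁆ =
        ⁅N ⁅N y, x⁆, z⁆ - ⁅N y, ⁅N x, z⁆⁆) ∧
    (∀ x y z : g,
      -N ⁅x, ⁅N y, z⁆ - ⁅N z, y⁆ + -N ⁅y, z⁆⁆ +
        -N ⁅y, ⁅N z, x⁆ - ⁅N x, z⁆ + -N ⁅z, x⁆⁆ +
        -N ⁅z, ⁅N x, y⁆ - ⁅N y, x⁆ + -N ⁅x, y⁆⁆ +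
        ⁅N x, -N ⁅y, z⁆⁆ + ⁅N y, -N ⁅z, x⁆⁆ + ⁅N z, -N ⁅x, y⁆⁆ = 0) := by
  refine ⟨fun x y => ?_, fun x y z => ?_, fun x y z => ?_⟩
  · rw [← lie_skew x y, map_neg]
  · have h : N ⁅N x, y⁆ + N (-N ⁅x, y⁆) = ⁅N x, N y⁆ + N ⁅N y, x⁆ := by
      rw [hN x y, ← lie_skew x (N y)]
      simp only [map_add, map_sub, map_neg]
      abel
    have h2 := congrArg (fun w => ⁅w, z⁆) h
    simp only [add_lie, lie_lie] at h2
    rw [sub_add_eq_add_sub, h2]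
    abel
  · have J (a b c : g) : ⁅a, ⁅b, c⁆⁆ + ⁅b, ⁅c, a⁆⁆ + ⁅c, ⁅a, b⁆⁆ = 0 := lie_jacobi a b c
    have hJ := congrArg N (J x y z)
    have key : (⁅x, ⁅N y, z⁆ - ⁅N z, y⁆ + -N ⁅y, z⁆⁆ +
        ⁅y, ⁅N z, x⁆ - ⁅N x, z⁆ + -N ⁅z, x⁆⁆ +
        ⁅z, ⁅N x, y⁆ - ⁅N y, x⁆ + -N ⁅x, y⁆⁆) +
        (⁅N x, ⁅y, z⁆⁆ + ⁅x, N ⁅y, z⁆⁆ - N ⁅x, ⁅y, z⁆⁆) +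
        (⁅N y, ⁅z, x⁆⁆ + ⁅y, N ⁅z, x⁆⁆ - N ⁅y, ⁅z, x⁆⁆) +
        (⁅N z, ⁅x, y⁆⁆ + ⁅z, N ⁅x, y⁆⁆ - N ⁅z, ⁅x, y⁆⁆) = 0 := by
      simp only [map_add, map_zero] at hJ
      have h1 := J (N x) y z
      have h2 := J x (N y) z
      have h3 := J x y (N z)
      rw [← lie_skew z (N x), lie_neg] at h1
      rw [← lie_skew x (N y), lie_neg] at h2
      rw [← lie_skew y (N z), lie_neg] at h3
      simp only [lie_add, lie_sub, lie_neg] at *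
      grind
    have hk := congrArg N key
    rw [lie_neg, lie_neg, lie_neg, hN x, hN y, hN z]
    rw [map_add, map_add, map_add, map_add, map_add, map_zero] at hk
    rw [← neg_eq_zero, ← hk]
    abel
end

section
/- Let (p, ⋄, ⌊·,·⌋) be an NS-Lie algebra over a field k. Then the bracket ⟦x, y⟧ := x ⋄ y − y ⋄ x + ⌊x, y⌋ is a Lie bracket on p, i.e. it is antisymmetric and satisfies the Jacobi identity (the subadjacent Lie algebra of the NS-Lie algebra). -/
/-!
The first NS-Lie identity says that left `⋄`-multiplication turns the subadjacent bracket into a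
commutator: `⟦x, y⟧ ⋄ z = x ⋄ (y ⋄ z) − y ⋄ (x ⋄ z)` (`subAdj_left`). Substituting this into the
cyclic sum of `⟦⟦x, y⟧, z⟧ = ⟦x, y⟧ ⋄ z − z ⋄ ⟦x, y⟧ + ⌊⟦x, y⟧, z⌋`, all terms with two
`⋄`-products cancel, and what remains is the negative of the second NS-Lie identity.
-/

/-- The subadjacent bracket `⟦x, y⟧ = x ⋄ y − y ⋄ x + ⌊x, y⌋` of an NS-Lie algebra. -/
def subAdj {K : Type*} [Field K] {p : Type*} [AddCommGroup p] [Module K p]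
    (d b : p →ₗ[K] p →ₗ[K] p) (x y : p) : p :=
  d x y - d y x + b x y

/-- Left `⋄`-multiplication represents the subadjacent bracket as a commutator. -/
theorem subAdj_left {K : Type*} [Field K] {p : Type*} [AddCommGroup p] [Module K p]
    (d b : p →ₗ[K] p →ₗ[K] p)
    (hNSL1 : ∀ x y z : p,
      d (d x y) z - d x (d y z) + d (b x y) z = d (d y x) z - d y (d x z))
    (x y z : p) : d (subAdj d b x y) z = d x (d y z) - d y (d x z) := by
  have h := sub_eq_zero.mpr (hNSL1 x y z)
  simp only [subAdj, map_add, map_sub, LinearMap.add_apply, LinearMap.sub_apply]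
  rw [← sub_eq_zero, ← h]
  abel

/-- The subadjacent bracket of an NS-Lie algebra `(p, ⋄, ⌊·,·⌋)` is a Lie bracket. -/
theorem subadjacent_lie_algebra
    {K : Type*} [Field K] {p : Type*} [AddCommGroup p] [Module K p]
    (d b : p →ₗ[K] p →ₗ[K] p)
    (hba : ∀ x y : p, b x y = - b y x)
    (hNSL1 : ∀ x y z : p,
      d (d x y) z - d x (d y z) + d (b x y) z = d (d y x) z - d y (d x z))
    (hNSL2 : ∀ x y z : p,
      b x (subAdj d b y z) + b y (subAdj d b z x) + b z (subAdj d b x y) +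
        d x (b y z) + d y (b z x) + d z (b x y) = 0) :
    (∀ x y : p, subAdj d b x y = - subAdj d b y x) ∧
    (∀ x y z : p,
      subAdj d b (subAdj d b x y) z + subAdj d b (subAdj d b y z) x +
        subAdj d b (subAdj d b z x) y = 0) := by
  refine ⟨fun x y => ?_, fun x y z => ?_⟩
  · simp only [subAdj, hba y x]
    abel
  · have key : ∀ u v w : p, subAdj d b (subAdj d b u v) w =
        (d u (d v w) - d v (d u w)) - d w (d u v - d v u + b u v) - b w (subAdj d b u v) := by
      intro u v w
      have hL := subAdj_left d b hNSL1 u v w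
      rw [show subAdj d b (subAdj d b u v) w = d (subAdj d b u v) w - d w (subAdj d b u v)
        + b (subAdj d b u v) w from rfl, hL, hba _ w]
      simp only [subAdj]
      abel
    have h2 := hNSL2 x y z
    rw [key, key, key]
    simp only [map_add, map_sub]
    rw [← neg_eq_zero, ← h2]
    abel
end

section
/- Let (p, ⋄, ⌊·,·⌋) be an NS-Lie algebra over a field k and let (V, l, r, ψ) be a representation of it. Then the direct sum p ⊕ V with the operations (x, u) ⋄' (y, v) := (x ⋄ y, l_x v + r_y u) and ⌊(x, u), (y, v)⌋' := (⌊x, y⌋, ψ_x v − ψ_y u) is an NS-Lie algebra (the semidirect product). -/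
/-! Each identity is checked on components. The `p`-component is the corresponding axiom of
`(p, ⋄, ⌊·,·⌋)`. The `V`-component for arguments `(x, u)`, `(y, v)`, `(z, w)` is linear in
`(u, v, w)`. In (NSL1) the coefficient of `w` is (R1) at `(x, y)`, while those of `u` and `v` are
(R2) at `(y, z)` and `(x, z)`. In (NSL2), which is cyclically symmetric, the coefficients of `w`,
`u`, `v` are (R3) at `(x, y)`, `(y, z)`, `(z, x)`. -/

section

variable {K : Type*} [Field K] {p : Type*} [AddCommGroup p] [Module K p]
  {V : Type*} [AddCommGroup V] [Module K V]

/-- The `⋄`-operation of the semidirect product NS-Lie algebra on `p × V`. -/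
def sdDiamond (d : p →ₗ[K] p →ₗ[K] p) (l r : p →ₗ[K] Module.End K V)
    (a c : p × V) : p × V :=
  (d a.1 c.1, l a.1 c.2 + r c.1 a.2)

/-- The `⌊·,·⌋`-operation of the semidirect product NS-Lie algebra on `p × V`. -/
def sdFloor (b : p →ₗ[K] p →ₗ[K] p) (ψ : p →ₗ[K] Module.End K V)
    (a c : p × V) : p × V :=
  (b a.1 c.1, ψ a.1 c.2 - ψ c.1 a.2)

/-- The subadjacent bracket on the semidirect product `p × V`. -/
def sdSub (d b : p →ₗ[K] p →ₗ[K] p) (l r ψ : p →ₗ[K] Module.End K V)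
    (a c : p × V) : p × V :=
  sdDiamond d l r a c - sdDiamond d l r c a + sdFloor b ψ a c

/-- For an NS-Lie algebra `(p, ⋄, ⌊·,·⌋)` and a representation `(V, l, r, ψ)`, the
semidirect product operations make `p ⊕ V` into an NS-Lie algebra. -/
theorem semidirect_NS_lie_algebra
    (d b : p →ₗ[K] p →ₗ[K] p)
    (hba : ∀ x y : p, b x y = - b y x)
    (hNSL1 : ∀ x y z : p,
      d (d x y) z - d x (d y z) + d (b x y) z = d (d y x) z - d y (d x z))
    (hNSL2 : ∀ x y z : p,
      b x (d y z - d z y + b y z) + b y (d z x - d x z + b z x) +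
        b z (d x y - d y x + b x y) +
        d x (b y z) + d y (b z x) + d z (b x y) = 0)
    (l r ψ : p →ₗ[K] Module.End K V)
    (hR1 : ∀ (x y : p) (v : V),
      l (d x y) v - l x (l y v) + l (b x y) v = l (d y x) v - l y (l x v))
    (hR2 : ∀ (x y : p) (v : V),
      r (d x y) v - r y (r x v) + r y (ψ x v) = l x (r y v) - r y (l x v))
    (hR3 : ∀ (x y : p) (v : V),
      ψ (d x y - d y x + b x y) v - r (b x y) v =
        l x (ψ y v) - l y (ψ x v) + ψ x (l y v - r y v + ψ y v) -
          ψ y (l x v - r x v + ψ x v)) :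
    (∀ a c : p × V, sdFloor b ψ a c = - sdFloor b ψ c a) ∧
    (∀ a c e : p × V,
      sdDiamond d l r (sdDiamond d l r a c) e - sdDiamond d l r a (sdDiamond d l r c e) +
        sdDiamond d l r (sdFloor b ψ a c) e =
      sdDiamond d l r (sdDiamond d l r c a) e - sdDiamond d l r c (sdDiamond d l r a e)) ∧
    (∀ a c e : p × V,
      sdFloor b ψ a (sdSub d b l r ψ c e) + sdFloor b ψ c (sdSub d b l r ψ e a) +
        sdFloor b ψ e (sdSub d b l r ψ a c) +
        sdDiamond d l r a (sdFloor b ψ c e) + sdDiamond d l r c (sdFloor b ψ e a) +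
        sdDiamond d l r e (sdFloor b ψ a c) = 0) := by
  refine ⟨?_, ?_, ?_⟩
  · rintro ⟨x, u⟩ ⟨y, v⟩
    ext
    · simpa [sdFloor] using hba x y
    · simp [sdFloor]
  · rintro ⟨x, u⟩ ⟨y, v⟩ ⟨z, w⟩
    ext
    · simpa [sdDiamond, sdFloor] using hNSL1 x y z
    · have h1 := hR1 x y w
      have h2 := hR2 y z u
      have h3 := hR2 x z v
      simp only [sdDiamond, sdFloor, Prod.fst_add, Prod.snd_add, Prod.fst_sub, Prod.snd_sub,
        map_add, map_sub] at *
      linear_combination (norm := module) h1 - h2 + h3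
  · rintro ⟨x, u⟩ ⟨y, v⟩ ⟨z, w⟩
    ext
    · simpa [sdDiamond, sdFloor, sdSub] using hNSL2 x y z
    · have h1 := hR3 x y w
      have h2 := hR3 y z u
      have h3 := hR3 z x v
      simp only [sdDiamond, sdFloor, sdSub, Prod.fst_add, Prod.snd_add, Prod.fst_sub,
        Prod.snd_sub, Prod.snd_zero, map_add, map_sub, LinearMap.add_apply,
        LinearMap.sub_apply] at *
      linear_combination (norm := module) -h1 - h2 - h3

end
end

section
/- Let g be a Lie algebra over a field k with Nijenhuis operator N : g → g, and let (V, ρ, S) be a Nijenhuis representation of (g, N). Define l, r, ψ : g → End(V) by l_x v := ρ_{N x} v, r_x v := −ρ_x(S v), ψ_x v := −S(ρ_x v). Then (V, l, r, ψ) is a representation of the induced NS-Lie algebra (g, ⋄_N, ⌊·,·⌋_N), where x ⋄_N y := [N x, y] and ⌊x, y⌋_N := −N[x, y]; that is, the three representation identities (R1), (R2), (R3) hold. -/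
/-!
Each identity is a linear combination of a few instances of the hypotheses.
(R1) is `ρ` applied to the Nijenhuis identity for
`⁅N x, N y⁆`. (R2) is `ρ y` applied to the
compatibility of `S` and `ρ` at `(x, v)`. (R3) combines that compatibility at `(⁅x, y⁆, v)`,
`(x, ρ y v)` and `(y, ρ x v)`; everything else is the expansion of `ρ` on brackets.
-/

section

variable {K : Type*} [Field K] {g : Type*} [LieRing g] [LieAlgebra K g]
  {V : Type*} [AddCommGroup V] [Module K V]

/-- The induced NS-Lie operation `x ⋄_N y = [N x, y]`. -/
def nsDiamond (N : g →ₗ[K] g) (x y : g) : g := ⁅N x, y⁆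

/-- The induced NS-Lie operation `⌊x, y⌋_N = −N [x, y]`. -/
def nsFloor (N : g →ₗ[K] g) (x y : g) : g := -N ⁅x, y⁆

/-- The subadjacent bracket `⟦x, y⟧ = x ⋄_N y − y ⋄_N x + ⌊x, y⌋_N`. -/
def nsSub (N : g →ₗ[K] g) (x y : g) : g :=
  nsDiamond N x y - nsDiamond N y x + nsFloor N x y

/-- A Nijenhuis representation `(V, ρ, S)` of a Nijenhuis Lie algebra `(g, N)` yields a
representation `(V, l, r, ψ)` of the induced NS-Lie algebra `(g, ⋄_N, ⌊·,·⌋_N)`, where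
`l_x v = ρ_{N x} v`, `r_x v = −ρ_x (S v)`, `ψ_x v = −S (ρ_x v)`. -/
theorem nijenhuis_rep_to_NS_rep
    (N : g →ₗ[K] g)
    (hN : ∀ x y : g, ⁅N x, N y⁆ = N (⁅N x, y⁆ + ⁅x, N y⁆ - N ⁅x, y⁆))
    (ρ : g →ₗ[K] V →ₗ[K] V)
    (hρ : ∀ x y : g, ρ ⁅x, y⁆ = ρ x ∘ₗ ρ y - ρ y ∘ₗ ρ x)
    (S : V →ₗ[K] V)
    (hS : ∀ (x : g) (v : V), ρ (N x) (S v) = S (ρ (N x) v + ρ x (S v) - S (ρ x v))) :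
    -- (R1)
    (∀ (x y : g) (v : V),
      ρ (N (nsDiamond N x y)) v - ρ (N x) (ρ (N y) v) + ρ (N (nsFloor N x y)) v =
        ρ (N (nsDiamond N y x)) v - ρ (N y) (ρ (N x) v)) ∧
    -- (R2)
    (∀ (x y : g) (v : V),
      -ρ (nsDiamond N x y) (S v) - (-ρ y (S (-ρ x (S v)))) + (-ρ y (S (-S (ρ x v)))) =
        ρ (N x) (-ρ y (S v)) - (-ρ y (S (ρ (N x) v)))) ∧
    -- (R3)
    (∀ (x y : g) (v : V),
      -S (ρ (nsSub N x y) v) - (-ρ (nsFloor N x y) (S v)) =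
        ρ (N x) (-S (ρ y v)) - ρ (N y) (-S (ρ x v)) +
          (-S (ρ x (ρ (N y) v - (-ρ y (S v)) + (-S (ρ y v))))) -
          (-S (ρ y (ρ (N x) v - (-ρ x (S v)) + (-S (ρ x v)))))) := by
  refine ⟨fun x y v => ?_, fun x y v => ?_, fun x y v => ?_⟩
  · have h : ρ ⁅N x, N y⁆ v = ρ (N x) (ρ (N y) v) - ρ (N y) (ρ (N x) v) := by simp [hρ]
    rw [hN x y, ← lie_skew x (N y)] at h
    simp only [map_add, map_sub, map_neg, LinearMap.add_apply, LinearMap.sub_apply,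
      LinearMap.neg_apply] at h
    simp only [nsDiamond, nsFloor, map_neg, LinearMap.neg_apply]
    linear_combination (norm := abel) h
  · have h := congrArg (ρ y) (hS x v)
    simp only [map_add, map_sub] at h
    simp only [nsDiamond, hρ, map_neg, LinearMap.sub_apply, LinearMap.comp_apply, neg_neg]
    linear_combination (norm := abel) h
  · -- In `ρ (N ⁅x, y⁆) (S v)` the term `S (ρ (N ⁅x, y⁆) v)` cancels against the one coming
    -- from `nsSub`, so the Nijenhuis identity of `N` plays no role here.
    have h := hS ⁅x, y⁆ v
    have hx := hS x (ρ y v)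
    have hy := hS y (ρ x v)
    simp only [hρ, map_add, map_sub, LinearMap.sub_apply, LinearMap.comp_apply] at h hx hy
    simp only [nsSub, nsDiamond, nsFloor, hρ, map_add, map_sub, map_neg, LinearMap.add_apply,
      LinearMap.sub_apply, LinearMap.neg_apply, LinearMap.comp_apply, neg_neg]
    linear_combination (norm := abel) hx - hy - h

end
end

section
/- Let ((p₁, ⋄₁, ⌊·,·⌋₁), (p₂, ⋄₂, ⌊·,·⌋₂), l, r, ψ, L, R, Ψ) be a matched pair of NS-Lie algebras over a field k. Then p₁ ⊕ p₂ with the operations (x, α) ⋄ (y, β) := (x ⋄₁ y + L_α y + R_β x, α ⋄₂ β + l_x β + r_y α) and ⌊(x, α), (y, β)⌋ := (⌊x, y⌋₁ + Ψ_α y − Ψ_β x, ⌊α, β⌋₂ + ψ_x β − ψ_y α) is an NS-Lie algebra (the bicrossed product). -/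
/-!
Both NS-Lie identities are trilinear, so on `A × B` each splits, in each component, according to
which of the three arguments lie in `A` and which in `B`. For the `A`-component:

* all three arguments in `A`: the identity of `A` itself;
* two in `A`, one in `B`: a compatibility condition, `hM3` and `hM4` for the first identity and `hM6`
  for the second;
* one in `A`, two in `B`: an axiom of the representation `(A, L, R, Ψ)` of `B`;
* all three in `B`: no contribution.

The bicrossed product is symmetric under exchanging the two factors together with their actions,
so the `B`-component is the same statement with the roles of `A` and `B` reversed. The identities
are therefore proved only for the first component (`bc_diamond_fst` and `bc_floor_fst`) and used
twice.
-/

section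

variable {K : Type*} [Field K] {A : Type*} [AddCommGroup A] [Module K A]
  {B : Type*} [AddCommGroup B] [Module K B]

/-- The `⋄`-operation of the bicrossed product NS-Lie algebra on `A × B`. -/
def bcDiamond (m₁ : A →ₗ[K] A →ₗ[K] A) (m₂ : B →ₗ[K] B →ₗ[K] B)
    (l r : A →ₗ[K] Module.End K B) (L R : B →ₗ[K] Module.End K A)
    (a c : A × B) : A × B :=
  (m₁ a.1 c.1 + L a.2 c.1 + R c.2 a.1, m₂ a.2 c.2 + l a.1 c.2 + r c.1 a.2)

/-- The `⌊·,·⌋`-operation of the bicrossed product NS-Lie algebra on `A × B`. -/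
def bcFloor (c₁ : A →ₗ[K] A →ₗ[K] A) (c₂ : B →ₗ[K] B →ₗ[K] B)
    (ψ : A →ₗ[K] Module.End K B) (Ψ : B →ₗ[K] Module.End K A)
    (a c : A × B) : A × B :=
  (c₁ a.1 c.1 + Ψ a.2 c.1 - Ψ c.2 a.1, c₂ a.2 c.2 + ψ a.1 c.2 - ψ c.1 a.2)

/-- The first identity in the `A`-component, for the elements `(x, α)`, `(y, β)`, `(z, γ)`. -/
theorem bc_diamond_fst
    (m₁ c₁ : A →ₗ[K] A →ₗ[K] A) (m₂ c₂ : B →ₗ[K] B →ₗ[K] B)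
    (hA1 : ∀ x y z : A,
      m₁ (m₁ x y) z - m₁ x (m₁ y z) + m₁ (c₁ x y) z = m₁ (m₁ y x) z - m₁ y (m₁ x z))
    (l r ψ : A →ₗ[K] Module.End K B) (L R Ψ : B →ₗ[K] Module.End K A)
    (hS1 : ∀ (α β : B) (y : A),
      L (m₂ α β) y - L α (L β y) + L (c₂ α β) y = L (m₂ β α) y - L β (L α y))
    (hS2 : ∀ (α β : B) (y : A),
      R (m₂ α β) y - R β (R α y) + R β (Ψ α y) = L α (R β y) - R β (L α y))
    (hM3 : ∀ (α : B) (x y : A),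
      L α (m₁ x y) =
        m₁ (L α x) y + m₁ x (L α y) + m₁ (Ψ α x) y - m₁ (R α x) y +
          R (r y α) x - L (l x α - r x α + ψ x α) y)
    (hM4 : ∀ (α : B) (x y : A),
      R α (m₁ x y - m₁ y x + c₁ x y) =
        m₁ x (R α y) - m₁ y (R α x) + R (l y α) x - R (l x α) y)
    (x y z : A) (α β γ : B) :
    m₁ (m₁ x y + L α y + R β x) z + L (m₂ α β + l x β + r y α) z + R γ (m₁ x y + L α y + R β x) -
        (m₁ x (m₁ y z + L β z + R γ y) + L α (m₁ y z + L β z + R γ y) +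
          R (m₂ β γ + l y γ + r z β) x) +
        (m₁ (c₁ x y + Ψ α y - Ψ β x) z + L (c₂ α β + ψ x β - ψ y α) z +
          R γ (c₁ x y + Ψ α y - Ψ β x)) =
      m₁ (m₁ y x + L β x + R α y) z + L (m₂ β α + l y α + r x β) z + R γ (m₁ y x + L β x + R α y) -
        (m₁ y (m₁ x z + L α z + R γ x) + L β (m₁ x z + L α z + R γ x) +
          R (m₂ α γ + l x γ + r z α) y) := by
  have h₁ := hA1 x y z
  have h₂ := hM4 γ x y
  have h₃ := hM3 β x z
  have h₄ := hM3 α y z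
  have h₅ := hS1 α β z
  have h₆ := hS2 β γ x
  have h₇ := hS2 α γ y
  simp only [map_add, map_sub, LinearMap.add_apply, LinearMap.sub_apply] at h₁ h₂ h₃ h₄ h₅ h₆ h₇ ⊢
  linear_combination (norm := module) h₁ + h₂ + h₃ - h₄ + h₅ - h₆ + h₇

/-- The second identity in the `A`-component, for the elements `(x, α)`, `(y, β)`, `(z, γ)`. -/
theorem bc_floor_fst
    (m₁ c₁ : A →ₗ[K] A →ₗ[K] A) (m₂ c₂ : B →ₗ[K] B →ₗ[K] B)
    (hc₁a : ∀ x y : A, c₁ x y = - c₁ y x)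
    (hA2 : ∀ x y z : A,
      c₁ x (m₁ y z - m₁ z y + c₁ y z) + c₁ y (m₁ z x - m₁ x z + c₁ z x) +
        c₁ z (m₁ x y - m₁ y x + c₁ x y) +
        m₁ x (c₁ y z) + m₁ y (c₁ z x) + m₁ z (c₁ x y) = 0)
    (l r ψ : A →ₗ[K] Module.End K B) (L R Ψ : B →ₗ[K] Module.End K A)
    (hS3 : ∀ (α β : B) (y : A),
      Ψ (m₂ α β - m₂ β α + c₂ α β) y - R (c₂ α β) y =
        L α (Ψ β y) - L β (Ψ α y) + Ψ α (L β y - R β y + Ψ β y) -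
          Ψ β (L α y - R α y + Ψ α y))
    (hM6 : ∀ (α : B) (x y : A),
      L α (c₁ x y) =
        c₁ (L α x - R α x + Ψ α x) y + c₁ x (L α y - R α y + Ψ α y) +
          Ψ (l y α - r y α + ψ y α) x - Ψ (l x α - r x α + ψ x α) y +
          m₁ x (Ψ α y) - m₁ y (Ψ α x) + R (ψ x α) y - R (ψ y α) x -
          Ψ α (m₁ x y - m₁ y x + c₁ x y))
    (x y z : A) (α β γ : B) :
    ((c₁ x (m₁ y z + L β z + R γ y - (m₁ z y + L γ y + R β z) +
            (c₁ y z + Ψ β z - Ψ γ y)) +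
          Ψ α (m₁ y z + L β z + R γ y - (m₁ z y + L γ y + R β z) +
            (c₁ y z + Ψ β z - Ψ γ y)) -
          Ψ (m₂ β γ + l y γ + r z β - (m₂ γ β + l z β + r y γ) +
            (c₂ β γ + ψ y γ - ψ z β)) x) +
        (c₁ y (m₁ z x + L γ x + R α z - (m₁ x z + L α z + R γ x) +
            (c₁ z x + Ψ γ x - Ψ α z)) +
          Ψ β (m₁ z x + L γ x + R α z - (m₁ x z + L α z + R γ x) +
            (c₁ z x + Ψ γ x - Ψ α z)) -
          Ψ (m₂ γ α + l z α + r x γ - (m₂ α γ + l x γ + r z α) +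
            (c₂ γ α + ψ z α - ψ x γ)) y) +
        (c₁ z (m₁ x y + L α y + R β x - (m₁ y x + L β x + R α y) +
            (c₁ x y + Ψ α y - Ψ β x)) +
          Ψ γ (m₁ x y + L α y + R β x - (m₁ y x + L β x + R α y) +
            (c₁ x y + Ψ α y - Ψ β x)) -
          Ψ (m₂ α β + l x β + r y α - (m₂ β α + l y α + r x β) +
            (c₂ α β + ψ x β - ψ y α)) z)) +
        (m₁ x (c₁ y z + Ψ β z - Ψ γ y) + L α (c₁ y z + Ψ β z - Ψ γ y) +
          R (c₂ β γ + ψ y γ - ψ z β) x) +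
        (m₁ y (c₁ z x + Ψ γ x - Ψ α z) + L β (c₁ z x + Ψ γ x - Ψ α z) +
          R (c₂ γ α + ψ z α - ψ x γ) y) +
        (m₁ z (c₁ x y + Ψ α y - Ψ β x) + L γ (c₁ x y + Ψ α y - Ψ β x) +
          R (c₂ α β + ψ x β - ψ y α) z) = 0 := by
  have h₀ := hA2 x y z
  have h₁ := hM6 γ x y
  have h₂ := hM6 α y z
  have h₃ := hM6 β z x
  have h₄ := hS3 α β z
  have h₅ := hS3 β γ x
  have h₆ := hS3 γ α y
  -- In `hM6` the first argument of `c₁` is an action term; antisymmetry moves it to the second.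
  rw [hc₁a (L γ x - R γ x + Ψ γ x) y] at h₁
  rw [hc₁a (L α y - R α y + Ψ α y) z] at h₂
  rw [hc₁a (L β z - R β z + Ψ β z) x] at h₃
  simp only [map_add, map_sub, LinearMap.add_apply, LinearMap.sub_apply] at h₀ h₁ h₂ h₃ h₄ h₅ h₆ ⊢
  linear_combination (norm := abel) h₀ + h₁ + h₂ + h₃ - h₄ - h₅ - h₆

/-- A matched pair of NS-Lie algebras gives an NS-Lie algebra structure (the bicrossed
product) on the direct sum `p₁ ⊕ p₂`. -/
theorem bicrossed_product_NS_lie_algebra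
    (m₁ c₁ : A →ₗ[K] A →ₗ[K] A) (m₂ c₂ : B →ₗ[K] B →ₗ[K] B)
    -- `(A, m₁, c₁)` is an NS-Lie algebra
    (hc₁a : ∀ x y : A, c₁ x y = - c₁ y x)
    (hA1 : ∀ x y z : A,
      m₁ (m₁ x y) z - m₁ x (m₁ y z) + m₁ (c₁ x y) z = m₁ (m₁ y x) z - m₁ y (m₁ x z))
    (hA2 : ∀ x y z : A,
      c₁ x (m₁ y z - m₁ z y + c₁ y z) + c₁ y (m₁ z x - m₁ x z + c₁ z x) +
        c₁ z (m₁ x y - m₁ y x + c₁ x y) +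
        m₁ x (c₁ y z) + m₁ y (c₁ z x) + m₁ z (c₁ x y) = 0)
    -- `(B, m₂, c₂)` is an NS-Lie algebra
    (hc₂a : ∀ α β : B, c₂ α β = - c₂ β α)
    (hB1 : ∀ α β γ : B,
      m₂ (m₂ α β) γ - m₂ α (m₂ β γ) + m₂ (c₂ α β) γ = m₂ (m₂ β α) γ - m₂ β (m₂ α γ))
    (hB2 : ∀ α β γ : B,
      c₂ α (m₂ β γ - m₂ γ β + c₂ β γ) + c₂ β (m₂ γ α - m₂ α γ + c₂ γ α) +
        c₂ γ (m₂ α β - m₂ β α + c₂ α β) +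
        m₂ α (c₂ β γ) + m₂ β (c₂ γ α) + m₂ γ (c₂ α β) = 0)
    -- `(B, l, r, ψ)` is a representation of `(A, m₁, c₁)`
    (l r ψ : A →ₗ[K] Module.End K B)
    (hR1 : ∀ (x y : A) (β : B),
      l (m₁ x y) β - l x (l y β) + l (c₁ x y) β = l (m₁ y x) β - l y (l x β))
    (hR2 : ∀ (x y : A) (β : B),
      r (m₁ x y) β - r y (r x β) + r y (ψ x β) = l x (r y β) - r y (l x β))
    (hR3 : ∀ (x y : A) (β : B),
      ψ (m₁ x y - m₁ y x + c₁ x y) β - r (c₁ x y) β =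
        l x (ψ y β) - l y (ψ x β) + ψ x (l y β - r y β + ψ y β) -
          ψ y (l x β - r x β + ψ x β))
    -- `(A, L, R, Ψ)` is a representation of `(B, m₂, c₂)`
    (L R Ψ : B →ₗ[K] Module.End K A)
    (hS1 : ∀ (α β : B) (y : A),
      L (m₂ α β) y - L α (L β y) + L (c₂ α β) y = L (m₂ β α) y - L β (L α y))
    (hS2 : ∀ (α β : B) (y : A),
      R (m₂ α β) y - R β (R α y) + R β (Ψ α y) = L α (R β y) - R β (L α y))
    (hS3 : ∀ (α β : B) (y : A),
      Ψ (m₂ α β - m₂ β α + c₂ α β) y - R (c₂ α β) y =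
        L α (Ψ β y) - L β (Ψ α y) + Ψ α (L β y - R β y + Ψ β y) -
          Ψ β (L α y - R α y + Ψ α y))
    -- matched pair conditions (M1)–(M6)
    (hM1 : ∀ (x : A) (α β : B),
      l x (m₂ α β) =
        m₂ (l x α) β + m₂ α (l x β) + m₂ (ψ x α) β - m₂ (r x α) β +
          r (R β x) α - l (L α x - R α x + Ψ α x) β)
    (hM2 : ∀ (x : A) (α β : B),
      r x (m₂ α β - m₂ β α + c₂ α β) =
        m₂ α (r x β) - m₂ β (r x α) + r (L β x) α - r (L α x) β)
    (hM3 : ∀ (α : B) (x y : A),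
      L α (m₁ x y) =
        m₁ (L α x) y + m₁ x (L α y) + m₁ (Ψ α x) y - m₁ (R α x) y +
          R (r y α) x - L (l x α - r x α + ψ x α) y)
    (hM4 : ∀ (α : B) (x y : A),
      R α (m₁ x y - m₁ y x + c₁ x y) =
        m₁ x (R α y) - m₁ y (R α x) + R (l y α) x - R (l x α) y)
    (hM5 : ∀ (x : A) (α β : B),
      l x (c₂ α β) =
        c₂ (l x α - r x α + ψ x α) β + c₂ α (l x β - r x β + ψ x β) +
          ψ (L β x - R β x + Ψ β x) α - ψ (L α x - R α x + Ψ α x) β +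
          m₂ α (ψ x β) - m₂ β (ψ x α) + r (Ψ α x) β - r (Ψ β x) α -
          ψ x (m₂ α β - m₂ β α + c₂ α β))
    (hM6 : ∀ (α : B) (x y : A),
      L α (c₁ x y) =
        c₁ (L α x - R α x + Ψ α x) y + c₁ x (L α y - R α y + Ψ α y) +
          Ψ (l y α - r y α + ψ y α) x - Ψ (l x α - r x α + ψ x α) y +
          m₁ x (Ψ α y) - m₁ y (Ψ α x) + R (ψ x α) y - R (ψ y α) x -
          Ψ α (m₁ x y - m₁ y x + c₁ x y)) :
    -- conclusion: the bicrossed product is an NS-Lie algebra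
    (∀ a c : A × B, bcFloor c₁ c₂ ψ Ψ a c = - bcFloor c₁ c₂ ψ Ψ c a) ∧
    (∀ a c e : A × B,
      bcDiamond m₁ m₂ l r L R (bcDiamond m₁ m₂ l r L R a c) e -
        bcDiamond m₁ m₂ l r L R a (bcDiamond m₁ m₂ l r L R c e) +
        bcDiamond m₁ m₂ l r L R (bcFloor c₁ c₂ ψ Ψ a c) e =
      bcDiamond m₁ m₂ l r L R (bcDiamond m₁ m₂ l r L R c a) e -
        bcDiamond m₁ m₂ l r L R c (bcDiamond m₁ m₂ l r L R a e)) ∧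
    (∀ a c e : A × B,
      bcFloor c₁ c₂ ψ Ψ a
          (bcDiamond m₁ m₂ l r L R c e - bcDiamond m₁ m₂ l r L R e c +
            bcFloor c₁ c₂ ψ Ψ c e) +
        bcFloor c₁ c₂ ψ Ψ c
          (bcDiamond m₁ m₂ l r L R e a - bcDiamond m₁ m₂ l r L R a e +
            bcFloor c₁ c₂ ψ Ψ e a) +
        bcFloor c₁ c₂ ψ Ψ e
          (bcDiamond m₁ m₂ l r L R a c - bcDiamond m₁ m₂ l r L R c a +
            bcFloor c₁ c₂ ψ Ψ a c) +
        bcDiamond m₁ m₂ l r L R a (bcFloor c₁ c₂ ψ Ψ c e) +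
        bcDiamond m₁ m₂ l r L R c (bcFloor c₁ c₂ ψ Ψ e a) +
        bcDiamond m₁ m₂ l r L R e (bcFloor c₁ c₂ ψ Ψ a c) = 0) := by
  refine ⟨?_, ?_, ?_⟩
  · rintro ⟨x, α⟩ ⟨y, β⟩
    simp only [bcFloor, Prod.neg_mk, Prod.mk.injEq]
    rw [hc₁a x y, hc₂a α β]
    constructor <;> abel
  · rintro ⟨x, α⟩ ⟨y, β⟩ ⟨z, γ⟩
    exact Prod.ext
      (bc_diamond_fst m₁ c₁ m₂ c₂ hA1 l r ψ L R Ψ hS1 hS2 hM3 hM4 x y z α β γ)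
      (bc_diamond_fst m₂ c₂ m₁ c₁ hB1 L R Ψ l r ψ hR1 hR2 hM1 hM2 α β γ x y z)
  · rintro ⟨x, α⟩ ⟨y, β⟩ ⟨z, γ⟩
    exact Prod.ext
      (bc_floor_fst m₁ c₁ m₂ c₂ hc₁a hA2 l r ψ L R Ψ hS3 hM6 x y z α β γ)
      (bc_floor_fst m₂ c₂ m₁ c₁ hc₂a hB2 L R Ψ l r ψ hR3 hM5 α β γ x y z)

end
end
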